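/- arXiv:1111.0478 — 2 statements merged into one kernel-verified Lean document; each statement's English description precedes it below -/
import Mathlib

section
/- Let 0 < x < 1 and let α > 0 be real. Set y = x·exp(−2α²) (so 0 < y < 1), A = Σ_{n=1}^∞ √n·yⁿ, B = Σ_{n=1}^∞ √n·xⁿ, c = α(1 − x)/x, and k = exp(−2α²)(1 − x)/(1 − x·exp(−2α²)). Define s = (1/8)·[ 2α²/(1 − x) − (c·A)² − 2k·(c·A)(c·B) − 2(c·B)² − (α²/(1 − x))·k² ] and s' = (α²/8)·[ 2x/(1 − x) − ((1 − x)/(1 − x·exp(−2α²)))²·exp(−4α²)·(3 + 1/(1 − x)) ]. Then s < s'. (Hence s' < 0 is a sufficient criterion for the negativity of the Shchukin–Vogel determinant s, and thus for witnessing entanglement in the truly hybrid entangled state Σₙ pₙ |ψₙ⟩⟨ψₙ| with pₙ = (1−x)xⁿ⁻¹... pₙ = ((1−x)/x)xⁿ and ψₙ = (|0⟩|√n α⟩ + |1⟩|−√n α⟩)/√2.) -/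
/-!
The amplitudes are averages over the geometric distribution `pₙ`: with `q = exp (-2 α²)` one has
`c A = α ∑ pₙ √n qⁿ` and `c B = α ∑ pₙ √n`. A factor `α²` splits off the determinant, leaving the
positive amplitudes `∑ pₙ √n qⁿ` and `∑ pₙ √n`, which exceed `∑ pₙ qⁿ = k` and `∑ pₙ = 1` because
`√n ≥ 1`. The determinant strictly decreases in positive amplitudes, so it is strictly less than
its value at these bounds, which is `s'`.
-/

theorem div_one_sub_lt_tsum_mul_pow {w : ℕ → ℝ} {t : ℝ} (ht₀ : 0 < t) (ht₁ : t < 1)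
    (hsum : Summable fun n ↦ w n * t ^ n) (hw₀ : 0 ≤ w 0) (hw : ∀ n, 1 ≤ w (n + 1))
    {m : ℕ} (hm : 1 < w (m + 1)) :
    t / (1 - t) < ∑' n, w n * t ^ n := by
  have hgeom : HasSum (fun n ↦ t ^ (n + 1)) (t / (1 - t)) := by
    simpa only [pow_succ', div_eq_mul_inv] using
      (hasSum_geometric_of_lt_one ht₀.le ht₁).mul_left t
  calc t / (1 - t) = ∑' n, t ^ (n + 1) := hgeom.tsum_eq.symm
    _ < ∑' n, w (n + 1) * t ^ (n + 1) :=
        Summable.tsum_lt_tsum (fun n ↦ le_mul_of_one_le_left (by positivity) (hw n))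
          (lt_mul_of_one_lt_left (by positivity) hm) hgeom.summable
          ((summable_nat_add_iff 1).2 hsum)
    _ ≤ w 0 * t ^ 0 + ∑' n, w (n + 1) * t ^ (n + 1) :=
        le_add_of_nonneg_left (by simpa only [pow_zero, mul_one] using hw₀)
    _ = ∑' n, w n * t ^ n := hsum.tsum_eq_zero_add.symm

theorem summable_sqrt_mul_pow {t : ℝ} (ht : |t| < 1) :
    Summable fun n : ℕ ↦ √n * t ^ n := by
  refine (summable_norm_pow_mul_geometric_of_norm_lt_one (r := t) 1 ht).of_norm_bounded fun n ↦ ?_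
  have hsqrt : √n ≤ n :=
    (Real.sqrt_le_left n.cast_nonneg).2 (by exact_mod_cast Nat.le_self_pow two_ne_zero n)
  rw [norm_mul, norm_mul, pow_one, Real.norm_of_nonneg (Real.sqrt_nonneg _), RCLike.norm_natCast]
  gcongr

theorem div_one_sub_lt_tsum_sqrt_mul_pow {t : ℝ} (ht₀ : 0 < t) (ht₁ : t < 1) :
    t / (1 - t) < ∑' n : ℕ, √n * t ^ n := by
  refine div_one_sub_lt_tsum_mul_pow ht₀ ht₁
    (summable_sqrt_mul_pow (by rwa [abs_of_pos ht₀])) (Real.sqrt_nonneg _) (fun n ↦ ?_) (m := 1) ?_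
  · exact Real.one_le_sqrt.2 (by exact_mod_cast n.succ_pos)
  · rw [Real.lt_sqrt zero_le_one]
    norm_num

theorem overlap_mean_lt_sqrt_mean {x q : ℝ} (hx₀ : 0 < x) (hx₁ : x < 1)
    (hq₀ : 0 < q) (hxq : x * q < 1) :
    q * (1 - x) / (1 - x * q) < (1 - x) / x * ∑' n : ℕ, √n * (x * q) ^ n := by
  have hx : 0 < 1 - x := sub_pos.2 hx₁
  calc q * (1 - x) / (1 - x * q) = (1 - x) / x * (x * q / (1 - x * q)) := by field_simp
    _ < (1 - x) / x * ∑' n : ℕ, √n * (x * q) ^ n := by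
        gcongr
        exact div_one_sub_lt_tsum_sqrt_mul_pow (mul_pos hx₀ hq₀) hxq

/-- The closed form of the Shchukin–Vogel determinant in terms of the mean photon number
`N = α² ∑ pₙ n = α² / (1 - x)`, the mean overlap `k = ∑ pₙ ⟨√n α|-√n α⟩`, and the amplitudes
`a = c A` and `b = c B`, all of which are treated as independent real variables. -/
noncomputable def svDeterminant (N k a b : ℝ) : ℝ :=
  1 / 8 * (2 * N - a ^ 2 - 2 * k * a * b - 2 * b ^ 2 - N * k ^ 2)

theorem svDeterminant_lt_svDeterminant (N : ℝ) {k a a' b b' : ℝ} (hk : 0 ≤ k) (ha : 0 ≤ a)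
    (hb : 0 ≤ b) (haa' : a ≤ a') (hbb' : b < b') :
    svDeterminant N k a' b' < svDeterminant N k a b := by
  have hsq_a : a ^ 2 ≤ a' ^ 2 := by gcongr
  have hsq_b : b ^ 2 < b' ^ 2 := by gcongr
  have ha' : 0 ≤ a' := ha.trans haa'
  have hcross : 2 * k * a * b ≤ 2 * k * a' * b' := by gcongr
  unfold svDeterminant
  linarith

theorem svDeterminant_smul (r N k a b : ℝ) :
    svDeterminant (r ^ 2 * N) k (r * a) (r * b) = r ^ 2 * svDeterminant N k a b := by
  unfold svDeterminant
  ring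

theorem svDeterminant_overlap_one (N k : ℝ) :
    svDeterminant N k k 1 = 1 / 8 * (2 * (N - 1) - k ^ 2 * (3 + N)) := by
  unfold svDeterminant
  ring

/-- Here `q` stands for the overlap `⟨α|-α⟩ = exp (-2 α²)`, so that `⟨√n α|-√n α⟩ = qⁿ`. -/
theorem SV_determinant_lower_bound_substitution_general {x α q c k : ℝ}
    (hx₀ : 0 < x) (hx₁ : x < 1) (hα : α ≠ 0) (hq₀ : 0 < q) (hxq : x * q < 1)
    (hc : c = α * (1 - x) / x) (hk : k = q * (1 - x) / (1 - x * q)) :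
    svDeterminant (α ^ 2 / (1 - x)) k
        (c * ∑' n : ℕ, √n * (x * q) ^ n) (c * ∑' n : ℕ, √n * x ^ n) <
      α ^ 2 / 8 * (2 * x / (1 - x) - k ^ 2 * (3 + 1 / (1 - x))) := by
  have hx : 0 < 1 - x := sub_pos.2 hx₁
  have hk₀ : 0 ≤ k := hk ▸ div_nonneg (mul_pos hq₀ hx).le (sub_pos.2 hxq).le
  have hA : k < (1 - x) / x * ∑' n : ℕ, √n * (x * q) ^ n :=
    hk ▸ overlap_mean_lt_sqrt_mean hx₀ hx₁ hq₀ hxq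
  have hB : 1 < (1 - x) / x * ∑' n : ℕ, √n * x ^ n := by
    simpa only [mul_one, one_mul, div_self hx.ne'] using
      overlap_mean_lt_sqrt_mean hx₀ hx₁ one_pos (by rwa [mul_one])
  have hN : 1 / (1 - x) - 1 = x / (1 - x) := by
    rw [div_sub_one hx.ne', sub_sub_cancel]
  rw [hc, mul_div_assoc, mul_assoc, mul_assoc, div_eq_mul_one_div (α ^ 2) (1 - x),
    svDeterminant_smul]
  calc α ^ 2 * svDeterminant (1 / (1 - x)) k _ _
      < α ^ 2 * svDeterminant (1 / (1 - x)) k k 1 := by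
        gcongr
        exact svDeterminant_lt_svDeterminant _ hk₀ hk₀ zero_le_one hA.le hB
    _ = α ^ 2 / 8 * (2 * x / (1 - x) - k ^ 2 * (3 + 1 / (1 - x))) := by
        rw [svDeterminant_overlap_one, hN]
        ring

/-- The lower-bound substitution for the Shchukin–Vogel determinant of the truly hybrid
entangled state `Σₙ pₙ |ψₙ⟩⟨ψₙ|` with `pₙ = ((1−x)/x)xⁿ` and
`ψₙ = (|0⟩|√n α⟩ + |1⟩|−√n α⟩)/√2`: replacing the series `A = Σ√n yⁿ` (with
`y = x e^{−2α²}`) and `B = Σ√n xⁿ` by their strict lower bounds yields `s'` with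
`s < s'`; hence `s' < 0` is a sufficient criterion for entanglement detection. -/
theorem SV_determinant_lower_bound_substitution
    (x α : ℝ) (hx₀ : 0 < x) (hx₁ : x < 1) (hα : 0 < α)
    (y : ℝ) (hy : y = x * Real.exp (-2 * α ^ 2))
    (A : ℝ) (hA : A = ∑' n : ℕ, Real.sqrt n * y ^ n)
    (B : ℝ) (hB : B = ∑' n : ℕ, Real.sqrt n * x ^ n)
    (c : ℝ) (hc : c = α * (1 - x) / x)
    (k : ℝ) (hk : k = Real.exp (-2 * α ^ 2) * (1 - x) / (1 - x * Real.exp (-2 * α ^ 2)))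
    (s : ℝ) (hs : s = (1 / 8) * (2 * α ^ 2 / (1 - x) - (c * A) ^ 2
      - 2 * k * (c * A) * (c * B) - 2 * (c * B) ^ 2 - (α ^ 2 / (1 - x)) * k ^ 2))
    (s' : ℝ) (hs' : s' = (α ^ 2 / 8) * (2 * x / (1 - x)
      - ((1 - x) / (1 - x * Real.exp (-2 * α ^ 2))) ^ 2 * Real.exp (-4 * α ^ 2)
        * (3 + 1 / (1 - x)))) :
    s < s' := by
  have hexp : Real.exp (-4 * α ^ 2) = Real.exp (-2 * α ^ 2) ^ 2 := by
    rw [← Real.exp_nat_mul]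
    ring_nf
  have hexp_le : Real.exp (-2 * α ^ 2) ≤ 1 := Real.exp_le_one_iff.2 (by nlinarith [sq_nonneg α])
  have hxq : x * Real.exp (-2 * α ^ 2) < 1 :=
    (mul_le_of_le_one_right hx₀.le hexp_le).trans_lt hx₁
  have hs_det : s = svDeterminant (α ^ 2 / (1 - x)) k (c * A) (c * B) := by
    rw [hs, svDeterminant, mul_div_assoc]
  have hs'_k : s' = α ^ 2 / 8 * (2 * x / (1 - x) - k ^ 2 * (3 + 1 / (1 - x))) := by
    rw [hs', hexp, hk]
    ring
  rw [hs_det, hs'_k, hA, hB, hy]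
  exact SV_determinant_lower_bound_substitution_general hx₀ hx₁ hα.ne' (Real.exp_pos _) hxq hc hk
end

section
/- The function f(t) = t/(2·exp(t) − 1) on (0, ∞) attains a strict global maximum at a unique point t* ∈ (0, 1), and t* is the unique positive solution of 2·exp(t)·(1 − t) = 1. (Consequently, the optimal coherent-state amplitude α_opt = √(t*)/2 ≈ 0.44 maximizing the witnessing bound 4ηα²/((1−η)(2e^{4α²} − 1)) is independent of the channel transmissivity η.) -/
/-!
Maximizing `t / (a eᵗ - 1)` amounts to minimizing the slope of the line joining the origin to a
point on the graph of the strictly convex function `g t = a eᵗ - 1`. The equation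
`a eˢ (1 - s) = 1` says that the tangent to `g` at `s` passes through the origin; the rest of the
graph then lies strictly above this line, so every positive solution is a strict global maximizer.
Two strict global maximizers must coincide, and a solution in `(0, 1)` exists by the intermediate
value theorem.
-/

open Real Set

section TangentThroughOrigin

variable {a s t : ℝ}

theorem mul_exp_mul_lt_mul_exp_sub_one (ha : 0 < a) (hs : a * exp s * (1 - s) = 1) (hne : t ≠ s) :
    a * exp s * t < a * exp t - 1 :=
  calc
    a * exp s * t = a * exp s * (t - s + 1) - a * exp s * (1 - s) := by ring
    _ = a * exp s * (t - s + 1) - 1 := by rw [hs]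
    _ < a * exp s * exp (t - s) - 1 := by
      gcongr
      exact add_one_lt_exp (sub_ne_zero.mpr hne)
    _ = a * exp t - 1 := by rw [mul_assoc, ← exp_add, add_sub_cancel]

theorem div_mul_exp_sub_one_eq_inv (hs₀ : s ≠ 0) (hs : a * exp s * (1 - s) = 1) :
    s / (a * exp s - 1) = (a * exp s)⁻¹ := by
  have tangent_eq : a * exp s - 1 = a * exp s * s := by linear_combination hs
  rw [tangent_eq, div_mul_cancel_right₀ hs₀]

theorem div_mul_exp_sub_one_lt (hs₀ : s ≠ 0) (hs : a * exp s * (1 - s) = 1)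
    (ht : 1 < a * exp t) (hne : t ≠ s) :
    t / (a * exp t - 1) < s / (a * exp s - 1) := by
  have ha : 0 < a := pos_of_mul_pos_left (one_pos.trans ht) (exp_pos t).le
  rw [div_mul_exp_sub_one_eq_inv hs₀ hs, div_lt_iff₀ (sub_pos.mpr ht),
    lt_inv_mul_iff₀ (mul_pos ha (exp_pos s))]
  exact mul_exp_mul_lt_mul_exp_sub_one ha hs hne

theorem exists_mem_Ioo_mul_exp_mul_one_sub_eq_one (ha : 1 < a) :
    ∃ s ∈ Ioo (0 : ℝ) 1, a * exp s * (1 - s) = 1 := by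
  have hcont : ContinuousOn (fun s : ℝ => a * exp s * (1 - s)) (Icc 0 1) := by fun_prop
  exact intermediate_value_Ioo' zero_le_one hcont ⟨by simp, by simpa using ha⟩

end TangentThroughOrigin

theorem SV_witness_optimal_amplitude_general {a : ℝ} (ha : 1 < a) :
    ∃ t0 : ℝ, 0 < t0 ∧ t0 < 1 ∧
      (∀ t : ℝ, 0 < t → t ≠ t0 → t / (a * exp t - 1) < t0 / (a * exp t0 - 1)) ∧
      a * exp t0 * (1 - t0) = 1 ∧
      (∀ t : ℝ, 0 < t → a * exp t * (1 - t) = 1 → t = t0) := by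
  obtain ⟨s, ⟨hs₀, hs₁⟩, hs⟩ := exists_mem_Ioo_mul_exp_mul_one_sub_eq_one ha
  have one_lt {t : ℝ} (ht : 0 < t) : 1 < a * exp t := one_lt_mul_of_lt_of_le ha (one_le_exp ht.le)
  have strict_max {r t : ℝ} (hr₀ : 0 < r) (hr : a * exp r * (1 - r) = 1) (ht : 0 < t)
      (hne : t ≠ r) : t / (a * exp t - 1) < r / (a * exp r - 1) :=
    div_mul_exp_sub_one_lt hr₀.ne' hr (one_lt ht) hne
  refine ⟨s, hs₀, hs₁, fun t => strict_max hs₀ hs, hs, fun t ht₀ ht => ?_⟩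
  by_contra hne
  exact (strict_max hs₀ hs ht₀ hne).asymm (strict_max ht₀ ht hs₀ (Ne.symm hne))

/-- The function `f(t) = t/(2eᵗ − 1)` on `(0, ∞)` attains a strict global maximum at a
unique point `t* ∈ (0, 1)`, which is the unique positive solution of
`2eᵗ(1 − t) = 1`. Consequently the optimal amplitude `α_opt = √(t*)/2` for the
Shchukin–Vogel witness is independent of the channel transmissivity. -/
theorem SV_witness_optimal_amplitude :
    ∃ t0 : ℝ, 0 < t0 ∧ t0 < 1 ∧
      (∀ t : ℝ, 0 < t → t ≠ t0 →
        t / (2 * Real.exp t - 1) < t0 / (2 * Real.exp t0 - 1)) ∧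
      2 * Real.exp t0 * (1 - t0) = 1 ∧
      (∀ t : ℝ, 0 < t → 2 * Real.exp t * (1 - t) = 1 → t = t0) :=
  SV_witness_optimal_amplitude_general one_lt_two
end
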